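/- Consider the car model with steering dynamics: ẋ = cos(θ₂ − θ₁)cos(θ₁)u₁, ẏ = cos(θ₂ − θ₁)sin(θ₁)u₁, θ̇₁ = sin(θ₂ − θ₁)u₁, θ̇₂ = ω₂, ω̇₂ = u₂, on the open domain where cos(θ₁) ≠ 0 and cos(θ₂ − θ₁) ≠ 0, with controls (u₁, u₂). Define z₁ = x, z₂ = y, z₃ = tan(θ₁), z₄ = tan(θ₂ − θ₁)/cos³(θ₁), and v₁ = cos(θ₂ − θ₁)cos(θ₁)u₁. Then along every trajectory: ż₁ = v₁, ż₂ = z₃v₁, ż₃ = z₄v₁, and there exist smooth functions a₁ (of three variables) and a₂ (of two variables) such that ż₄ = a₁(z₃, z₄, ω₂) + a₂(z₃, z₄)v₁. Hence, after introducing z₅ = a₁(z₃, z₄, ω₂) and a suitable invertible static feedback, the system takes the normal form NF″₉ compatible with the minimal x-flat output φ = (x, y) = (z₁, z₂). -/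

import Mathlib

/-!
Formalization framework for two-input control-affine systems
`ẋ = f(x) + u₁g₁(x) + u₂g₂(x)` on open subsets of ℝⁿ, flatness,
x-flatness, differential weight, static feedback equivalence,
static feedback linearization and linearization via prolongations,
following Nicolau–Gstöttner–Respondek, "Normal forms for x-flat
two-input control-affine systems in dimension five".
-/

noncomputable section

namespace ControlAffine

/-- A control-affine system `ẋ = f(x) + Σᵢ uᵢ gᵢ(x)` with `n` states and `m` controls. -/
structure CAS (n m : ℕ) where
  f : (Fin n → ℝ) → (Fin n → ℝ)
  g : Fin m → (Fin n → ℝ) → (Fin n → ℝ)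

variable {n m : ℕ}

/-- The control-dependent vector field `f(x) + Σᵢ uᵢ gᵢ(x)`. -/
def CAS.vf (S : CAS n m) (x : Fin n → ℝ) (u : Fin m → ℝ) : Fin n → ℝ :=
  S.f x + ∑ i, u i • S.g i x

/-- Smoothness of the defining vector fields on a set `X`. -/
def CAS.SmoothOn (S : CAS n m) (X : Set (Fin n → ℝ)) : Prop :=
  ContDiffOn ℝ (⊤ : ℕ∞) S.f X ∧ ∀ i, ContDiffOn ℝ (⊤ : ℕ∞) (S.g i) X

/-- `(x, u)` is a trajectory of `S` remaining in `X`. -/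
def CAS.IsTrajOn (S : CAS n m) (X : Set (Fin n → ℝ))
    (x : ℝ → Fin n → ℝ) (u : ℝ → Fin m → ℝ) : Prop :=
  (∀ t, x t ∈ X) ∧ ∀ t, HasDerivAt x (S.vf (x t) (u t)) t

/-- The `L`-jet `(u, u̇, …, u^{(L-1)})` of a control at time `t`
(`L = 0` corresponds to `l = -1`, i.e. no control derivatives at all). -/
def ujet (L : ℕ) (u : ℝ → Fin m → ℝ) (t : ℝ) : Fin L → Fin m → ℝ :=
  fun k => iteratedDeriv k u t

/-- `φ`, a function of the state only, is an x-flat output of `S` at the point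
`(x₀, ubar₀)` (a state together with an `L`-jet of controls): there are a
neighborhood `O` of that point, and smooth maps `γ`, `δ` reconstructing the state
from the derivatives `φᵢ, φ̇ᵢ, …, φᵢ^{(sᵢ-1)}` and the control from
`φᵢ, φ̇ᵢ, …, φᵢ^{(sᵢ)}` along every smooth trajectory remaining over `O`. -/
def IsXFlatOutputAt (S : CAS n m) (X : Set (Fin n → ℝ)) (L : ℕ)
    (x₀ : Fin n → ℝ) (ubar₀ : Fin L → Fin m → ℝ)
    (φ : (Fin n → ℝ) → Fin m → ℝ) (s : Fin m → ℕ) : Prop :=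
  ∃ (O : Set ((Fin n → ℝ) × (Fin L → Fin m → ℝ)))
    (γ : ((i : Fin m) → Fin (s i) → ℝ) → Fin n → ℝ)
    (δ : ((i : Fin m) → Fin (s i + 1) → ℝ) → Fin m → ℝ),
    IsOpen O ∧ (x₀, ubar₀) ∈ O ∧ (∀ q ∈ O, Prod.fst q ∈ X) ∧
    ContDiff ℝ (⊤ : ℕ∞) γ ∧ ContDiff ℝ (⊤ : ℕ∞) δ ∧
    ∀ (x : ℝ → Fin n → ℝ) (u : ℝ → Fin m → ℝ), ContDiff ℝ (⊤ : ℕ∞) u →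
      S.IsTrajOn X x u → (∀ t, (x t, ujet L u t) ∈ O) →
      ∀ t, x t = γ (fun i k => iteratedDeriv k (fun τ => φ (x τ) i) t) ∧
           u t = δ (fun i k => iteratedDeriv k (fun τ => φ (x τ) i) t)

/-- `S` is x-flat at the point `(x₀, ubar₀)`. -/
def IsXFlatAt (S : CAS n m) (X : Set (Fin n → ℝ)) (L : ℕ)
    (x₀ : Fin n → ℝ) (ubar₀ : Fin L → Fin m → ℝ) : Prop :=
  ∃ (φ : (Fin n → ℝ) → Fin m → ℝ) (s : Fin m → ℕ),
    ContDiff ℝ (⊤ : ℕ∞) φ ∧ IsXFlatOutputAt S X L x₀ ubar₀ φ s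

/-- `S` is x-flat at `(x₀, ubar₀)` with an x-flat output of differential weight
`∑ᵢ (sᵢ + 1) = m + ∑ᵢ sᵢ` at most `w`. -/
def XFlatWeightLE (S : CAS n m) (X : Set (Fin n → ℝ)) (L : ℕ)
    (x₀ : Fin n → ℝ) (ubar₀ : Fin L → Fin m → ℝ) (w : ℕ) : Prop :=
  ∃ (φ : (Fin n → ℝ) → Fin m → ℝ) (s : Fin m → ℕ),
    ContDiff ℝ (⊤ : ℕ∞) φ ∧ IsXFlatOutputAt S X L x₀ ubar₀ φ s ∧
    ∑ i, (s i + 1) ≤ w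

/-- Local static feedback equivalence of `S` (around `x₀`, within `X`) and `S'`
(around `z₀`), via a local diffeomorphism `z = ψ(x)` and an invertible static
feedback `u = α(x) + β(x)v`; the additional predicate `P` allows to record
extra compatibility properties of the normalizing diffeomorphism `ψ`. -/
def LocallySFEThrough (S S' : CAS n m) (X : Set (Fin n → ℝ)) (x₀ z₀ : Fin n → ℝ)
    (P : Set (Fin n → ℝ) → ((Fin n → ℝ) → Fin n → ℝ) → Prop) : Prop :=
  ∃ (U : Set (Fin n → ℝ)) (ψ ψinv : (Fin n → ℝ) → Fin n → ℝ)
    (α : (Fin n → ℝ) → Fin m → ℝ) (β : (Fin n → ℝ) → Fin m → Fin m → ℝ),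
    IsOpen U ∧ x₀ ∈ U ∧ U ⊆ X ∧ ψ x₀ = z₀ ∧
    ContDiffOn ℝ (⊤ : ℕ∞) ψ U ∧ IsOpen (ψ '' U) ∧
    ContDiffOn ℝ (⊤ : ℕ∞) ψinv (ψ '' U) ∧ (∀ x ∈ U, ψinv (ψ x) = x) ∧
    ContDiffOn ℝ (⊤ : ℕ∞) α U ∧ ContDiffOn ℝ (⊤ : ℕ∞) (fun x => β x) U ∧
    (∀ x ∈ U, (Matrix.of (β x)).det ≠ 0) ∧
    (∀ x ∈ U, ∀ v : Fin m → ℝ,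
      fderiv ℝ ψ x (S.vf x fun i => α x i + ∑ j, β x i j * v j) = S'.vf (ψ x) v) ∧
    P U ψ

/-- Local static feedback equivalence of `S` around `x₀` and `S'` around `z₀`. -/
def LocallySFE (S S' : CAS n m) (X : Set (Fin n → ℝ)) (x₀ z₀ : Fin n → ℝ) : Prop :=
  LocallySFEThrough S S' X x₀ z₀ fun _ _ => True

/-- `S` is a linear controllable system `ż = Az + Bv` (Kalman rank condition). -/
def IsLinearControllable (S : CAS n m) : Prop :=
  ∃ (A : Matrix (Fin n) (Fin n) ℝ) (B : Matrix (Fin n) (Fin m) ℝ),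
    (∀ x, S.f x = A.mulVec x) ∧ (∀ j x, S.g j x = fun i => B i j) ∧
    Submodule.span ℝ
      {w : Fin n → ℝ | ∃ (k : ℕ) (j : Fin m), w = (A ^ k).mulVec fun i => B i j} = ⊤

/-- `S` is locally static feedback linearizable around `x₀` (within `X`). -/
def SFLinAt (S : CAS n m) (X : Set (Fin n → ℝ)) (x₀ : Fin n → ℝ) : Prop :=
  ∃ (S' : CAS n m) (z₀ : Fin n → ℝ), IsLinearControllable S' ∧ LocallySFE S S' X x₀ z₀

/-- The system obtained from `S` by the invertible static feedback
`u = α(x) + β(x)ũ`, i.e. `f̃ = f + gα`, `g̃ = gβ`. -/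
def feedback (S : CAS n m) (α : (Fin n → ℝ) → Fin m → ℝ)
    (β : (Fin n → ℝ) → Fin m → Fin m → ℝ) : CAS n m where
  f x := S.vf x (α x)
  g i x := ∑ j, β x j i • S.g j x

/-- The prolonged system `Σ^{(p,0)}`: the first control is replaced by a chain of
`p` integrators `ẏ₁ = y₂, …, ẏ_p = v₁` feeding `g₁`, the second control is kept;
for `p = 0` this is the system itself. -/
def prolong (S : CAS n 2) (p : ℕ) : CAS (n + p) 2 where
  f z :=
    Fin.append
      (fun i => S.f (fun i' => z (Fin.castAdd p i')) i +
        (if h : 0 < p then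
          z (Fin.natAdd n ⟨0, h⟩) * S.g 0 (fun i' => z (Fin.castAdd p i')) i
        else 0))
      (fun j : Fin p =>
        if h : (j : ℕ) + 1 < p then z (Fin.natAdd n ⟨(j : ℕ) + 1, h⟩) else 0)
  g c :=
    if c = 0 then fun z =>
      Fin.append
        (fun i => if 0 < p then 0 else S.g 0 (fun i' => z (Fin.castAdd p i')) i)
        (fun j : Fin p => if (j : ℕ) + 1 = p then 1 else 0)
    else fun z =>
      Fin.append
        (fun i => S.g 1 (fun i' => z (Fin.castAdd p i')) i)
        (fun _ : Fin p => 0)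

/-- The cylinder `X × ℝᵖ` over a set of states, as a set of prolonged states. -/
def cylinder (X : Set (Fin n → ℝ)) (p : ℕ) : Set (Fin (n + p) → ℝ) :=
  {z | (fun i => z (Fin.castAdd p i)) ∈ X}

/-- `S` is dynamically linearizable, around `x₀`, via an invertible `p`-fold
prolongation: an invertible static feedback `u = α(x) + β(x)ũ` (defined near `x₀`)
brings `S` to a system whose `p`-fold prolongation of the first control is locally
static feedback linearizable. -/
def DynLinProlongAt (S : CAS n 2) (X : Set (Fin n → ℝ)) (x₀ : Fin n → ℝ)
    (p : ℕ) : Prop :=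
  ∃ (α : (Fin n → ℝ) → Fin 2 → ℝ) (β : (Fin n → ℝ) → Fin 2 → Fin 2 → ℝ)
    (U : Set (Fin n → ℝ)) (y₀ : Fin p → ℝ),
    IsOpen U ∧ x₀ ∈ U ∧ U ⊆ X ∧
    ContDiffOn ℝ (⊤ : ℕ∞) α U ∧ ContDiffOn ℝ (⊤ : ℕ∞) (fun x => β x) U ∧
    (∀ x ∈ U, (Matrix.of (β x)).det ≠ 0) ∧
    SFLinAt (prolong (feedback S α β) p) (cylinder U p) (Fin.append x₀ y₀)

/-- Lie bracket of two vector fields on ℝⁿ. -/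
def lieBracket (f g : (Fin n → ℝ) → Fin n → ℝ) (x : Fin n → ℝ) : Fin n → ℝ :=
  fderiv ℝ g x (f x) - fderiv ℝ f x (g x)

/-- Generators of the distributions `D⁰ = span{g₁,…,g_m}`,
`D^{j+1} = D^j + [f, D^j]`. -/
def distGens (S : CAS n m) : ℕ → Set ((Fin n → ℝ) → Fin n → ℝ)
  | 0 => Set.range S.g
  | j + 1 => distGens S j ∪ lieBracket S.f '' distGens S j

/-- Assumption (A): all the ranks involved (of the distributions
`D⁰ ⊂ D¹ ⊂ D² ⊂ …`) are constant around the given point. -/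
def AssumptionA (S : CAS n m) (x₀ : Fin n → ℝ) : Prop :=
  ∀ j : ℕ, ∃ (r : ℕ) (U : Set (Fin n → ℝ)), IsOpen U ∧ x₀ ∈ U ∧
    ∀ x ∈ U, Module.finrank ℝ
      (Submodule.span ℝ {w : Fin n → ℝ | ∃ h ∈ distGens S j, w = h x}) = r

/-- Restriction `z̄₄ = (z₁, z₂, z₃, z₄)` of a state in ℝ⁵. -/
def head4 (z : Fin 5 → ℝ) : Fin 4 → ℝ := fun i => z (Fin.castLE (by norm_num) i)

/-- Restriction `z̄₃ = (z₁, z₂, z₃)` of a state in ℝ⁵. -/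
def head3 (z : Fin 5 → ℝ) : Fin 3 → ℝ := fun i => z (Fin.castLE (by norm_num) i)

/-- The partial derivative `∂F/∂zᵢ` at `z`. -/
def pd {k : ℕ} (F : (Fin k → ℝ) → ℝ) (i : Fin k) (z : Fin k → ℝ) : ℝ :=
  deriv (fun t => F (Function.update z i t)) (z i)

/-- The normal form `NF`:
`ż₁ = v₁, ż₂ = z₃, ż₃ = b₁(z̄₄) + b₂(z̄₄)v₁, ż₄ = a₁(z) + a₂(z)v₁, ż₅ = v₂`. -/
def NF (b₁ b₂ : (Fin 4 → ℝ) → ℝ) (a₁ a₂ : (Fin 5 → ℝ) → ℝ) : CAS 5 2 where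
  f z := ![0, z 2, b₁ (head4 z), a₁ z, 0]
  g := ![fun z => ![1, 0, b₂ (head4 z), a₂ z, 0], fun _ => ![0, 0, 0, 0, 1]]

/-- The normal form `NF'`:
`ż₁ = z₂, ż₂ = v₁, ż₃ = b₁(z̄₄) + b₂(z̄₄)v₁, ż₄ = a₁(z) + a₂(z)v₁, ż₅ = v₂`. -/
def NF' (b₁ b₂ : (Fin 4 → ℝ) → ℝ) (a₁ a₂ : (Fin 5 → ℝ) → ℝ) : CAS 5 2 where
  f z := ![z 1, 0, b₁ (head4 z), a₁ z, 0]
  g := ![fun z => ![0, 1, b₂ (head4 z), a₂ z, 0], fun _ => ![0, 0, 0, 0, 1]]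

/-- The normal form `NF₇`:
`ż₁ = z₂, ż₂ = z₃, ż₃ = v₁, ż₄ = a₁(z) + (z₅ - z₅₀)v₁, ż₅ = v₂`. -/
def NF7 (a₁ : (Fin 5 → ℝ) → ℝ) (z₅₀ : ℝ) : CAS 5 2 where
  f z := ![z 1, z 2, 0, a₁ z, 0]
  g := ![fun z => ![0, 0, 1, z 4 - z₅₀, 0], fun _ => ![0, 0, 0, 0, 1]]

/-- The normal form `NF''`:
`ż₁ = v₁, ż₂ = c₁(z̄₃) + c₂(z̄₃)v₁, ż₃ = b₁(z̄₄) + b₂(z̄₄)v₁,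
 ż₄ = a₁(z) + a₂(z)v₁, ż₅ = v₂`. -/
def NF'' (c₁ c₂ : (Fin 3 → ℝ) → ℝ) (b₁ b₂ : (Fin 4 → ℝ) → ℝ)
    (a₁ a₂ : (Fin 5 → ℝ) → ℝ) : CAS 5 2 where
  f z := ![0, c₁ (head3 z), b₁ (head4 z), a₁ z, 0]
  g := ![fun z => ![1, c₂ (head3 z), b₂ (head4 z), a₂ z, 0], fun _ => ![0, 0, 0, 0, 1]]

/-- The normal form `NF₁₃`:
`ż₁ = v₁, ż₂ = z₃ + z₄v₁, ż₃ = a(z̄₄) + (-z₅ + b(z̄₄))v₁,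
 ż₄ = z₅ + c(z̄₄)v₁, ż₅ = v₂`. -/
def NF13 (a b c : (Fin 4 → ℝ) → ℝ) : CAS 5 2 where
  f z := ![0, z 2, a (head4 z), z 4, 0]
  g := ![fun z => ![1, z 3, -z 4 + b (head4 z), c (head4 z), 0],
        fun _ => ![0, 0, 0, 0, 1]]

/-- The car model with steering dynamics, with state `(x, y, θ₁, θ₂, ω₂)`
(coordinates `s 0, …, s 4`) and controls `(u₁, u₂)`:
`ẋ = cos(θ₂-θ₁)cos(θ₁)u₁`, `ẏ = cos(θ₂-θ₁)sin(θ₁)u₁`, `θ̇₁ = sin(θ₂-θ₁)u₁`,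
`θ̇₂ = ω₂`, `ω̇₂ = u₂`. -/
def car : CAS 5 2 where
  f s := ![0, 0, 0, s 4, 0]
  g := ![fun s => ![Real.cos (s 3 - s 2) * Real.cos (s 2),
                    Real.cos (s 3 - s 2) * Real.sin (s 2),
                    Real.sin (s 3 - s 2), 0, 0],
        fun _ => ![0, 0, 0, 0, 1]]

/-- The open domain `cos θ₁ ≠ 0`, `cos(θ₂ - θ₁) ≠ 0`. -/
def carDom : Set (Fin 5 → ℝ) := {s | Real.cos (s 2) ≠ 0 ∧ Real.cos (s 3 - s 2) ≠ 0}

/-- `z₃ = tan θ₁`. -/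
def carZ3 (s : Fin 5 → ℝ) : ℝ := Real.tan (s 2)

/-- `z₄ = tan(θ₂ - θ₁)/cos³θ₁`. -/
def carZ4 (s : Fin 5 → ℝ) : ℝ := Real.tan (s 3 - s 2) / (Real.cos (s 2)) ^ 3

/-- The new control `v₁ = cos(θ₂ - θ₁)cos(θ₁)u₁`. -/
def carV1 (s : Fin 5 → ℝ) (u : Fin 2 → ℝ) : ℝ :=
  Real.cos (s 3 - s 2) * Real.cos (s 2) * u 0

theorem exists_cos_tan_branch {θ₀ : ℝ} (h : Real.cos θ₀ ≠ 0) :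
    ∃ a ε : ℝ, ε ^ 2 = 1 ∧ |θ₀ - a| < Real.pi / 2 ∧
      ∀ θ, Real.cos θ = ε * Real.cos (θ - a) ∧ Real.tan θ = Real.tan (θ - a) := by
  set k : ℤ := round (θ₀ / Real.pi) with hk
  have hcos : ∀ θ, Real.cos (θ - k * Real.pi) = (-1) ^ k * Real.cos θ :=
    fun θ => Real.cos_sub_int_mul_pi θ k
  have hε : ((-1 : ℝ) ^ k) ^ 2 = 1 := by
    rcases Int.even_or_odd k with hk | hk
    · simp [hk.neg_one_zpow]
    · simp [hk.neg_one_zpow]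
  refine ⟨k * Real.pi, (-1) ^ k, hε, ?_, fun θ => ⟨?_, (Real.tan_sub_int_mul_pi θ k).symm⟩⟩
  · have hle : |θ₀ - k * Real.pi| ≤ Real.pi / 2 := by
      have hr := abs_sub_round (θ₀ / Real.pi)
      have he : θ₀ - k * Real.pi = (θ₀ / Real.pi - k) * Real.pi := by
        field_simp
      rw [he, abs_mul, abs_of_pos Real.pi_pos]
      nlinarith [Real.pi_pos]
    refine lt_of_le_of_ne hle fun heq => ?_
    have h0 : Real.cos (θ₀ - k * Real.pi) = 0 := by
      rw [← Real.cos_abs, heq, Real.cos_pi_div_two]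
    rw [hcos] at h0
    exact h ((mul_eq_zero.mp h0).resolve_left fun h1 => by simp [h1] at hε)
  · rw [hcos, ← mul_assoc, ← sq, hε, one_mul]

/-- The cosine of an angle with tangent `y`, on the branch where the cosine has sign `ε`. -/
def cosOfTan (ε y : ℝ) : ℝ := ε * (√(1 + y ^ 2))⁻¹

theorem cosOfTan_ne_zero {ε : ℝ} (hε : ε ^ 2 = 1) (y : ℝ) : cosOfTan ε y ≠ 0 := by
  have hε0 : ε ≠ 0 := by rintro rfl; norm_num at hε
  have : 0 < √(1 + y ^ 2) := by positivity
  exact mul_ne_zero hε0 (inv_ne_zero this.ne')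

@[fun_prop]
theorem contDiff_cosOfTan (ε : ℝ) : ContDiff ℝ (⊤ : ℕ∞) (cosOfTan ε) := by
  unfold cosOfTan
  refine contDiff_const.mul (ContDiff.inv (ContDiff.sqrt (by fun_prop) fun y => ?_) fun y => ?_)
  · positivity
  · have : 0 < √(1 + y ^ 2) := by positivity
    exact this.ne'

theorem cos_eq_cosOfTan {a ε θ : ℝ}
    (hbr : ∀ θ, Real.cos θ = ε * Real.cos (θ - a) ∧ Real.tan θ = Real.tan (θ - a))
    (hθ : |θ - a| < Real.pi / 2) : Real.cos θ = cosOfTan ε (Real.tan θ) := by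
  have hpos : 0 < Real.cos (θ - a) := Real.cos_pos_of_mem_Ioo (abs_lt.mp hθ)
  rw [cosOfTan, (hbr θ).2, Real.inv_sqrt_one_add_tan_sq hpos]
  exact (hbr θ).1

theorem tan_add_arctan_of_branch {a ε : ℝ}
    (hbr : ∀ θ, Real.cos θ = ε * Real.cos (θ - a) ∧ Real.tan θ = Real.tan (θ - a)) (y : ℝ) :
    Real.tan (a + Real.arctan y) = y := by
  rw [(hbr _).2, add_sub_cancel_left, Real.tan_arctan]

theorem add_arctan_tan_of_branch {a ε θ : ℝ}
    (hbr : ∀ θ, Real.cos θ = ε * Real.cos (θ - a) ∧ Real.tan θ = Real.tan (θ - a))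
    (hθ : |θ - a| < Real.pi / 2) : a + Real.arctan (Real.tan θ) = θ := by
  obtain ⟨h1, h2⟩ := abs_lt.mp hθ
  rw [(hbr θ).2, Real.arctan_tan h1 h2, add_sub_cancel]

/-- The states whose angles `θ₁` and `θ₂ - θ₁` lie less than `π/2` away from `a` and `b`. -/
def carChart (a b : ℝ) : Set (Fin 5 → ℝ) :=
  {s | |s 2 - a| < Real.pi / 2 ∧ |s 3 - s 2 - b| < Real.pi / 2}

theorem isOpen_carChart (a b : ℝ) : IsOpen (carChart a b) := by
  unfold carChart
  exact IsOpen.and (isOpen_lt (by fun_prop) continuous_const)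
    (isOpen_lt (by fun_prop) continuous_const)

theorem carChart_subset_carDom {a b ε η : ℝ} (hε : ε ^ 2 = 1) (hη : η ^ 2 = 1)
    (ha : ∀ θ, Real.cos θ = ε * Real.cos (θ - a) ∧ Real.tan θ = Real.tan (θ - a))
    (hb : ∀ θ, Real.cos θ = η * Real.cos (θ - b) ∧ Real.tan θ = Real.tan (θ - b)) :
    carChart a b ⊆ carDom := by
  rintro s ⟨h1, h2⟩
  exact ⟨cos_eq_cosOfTan ha h1 ▸ cosOfTan_ne_zero hε _,
    cos_eq_cosOfTan hb h2 ▸ cosOfTan_ne_zero hη _⟩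

/-- `z₅ = ω₂ (1 + tan²(θ₂ - θ₁))/cos³θ₁`. -/
def carZ5 (s : Fin 5 → ℝ) : ℝ :=
  s 4 * (1 + Real.tan (s 3 - s 2) ^ 2) / Real.cos (s 2) ^ 3

/-- The drift coefficient `a₁(z₃, z₄, ω₂)` of `ż₄`. -/
def carA1 (ε : ℝ) (w : Fin 3 → ℝ) : ℝ :=
  w 2 * (1 + w 1 ^ 2 * cosOfTan ε (w 0) ^ 6) / cosOfTan ε (w 0) ^ 3

/-- The coefficient `a₂(z₃, z₄)` of `v₁` in `ż₄`. -/
def carA2 (ε : ℝ) (w : Fin 2 → ℝ) : ℝ :=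
  3 * w 0 * w 1 ^ 2 * cosOfTan ε (w 0) ^ 2
    - (1 + w 1 ^ 2 * cosOfTan ε (w 0) ^ 6) * w 1 / cosOfTan ε (w 0)

theorem contDiff_carA1 {ε : ℝ} (hε : ε ^ 2 = 1) : ContDiff ℝ (⊤ : ℕ∞) (carA1 ε) := by
  unfold carA1
  exact ContDiff.div (by fun_prop) (by fun_prop) fun w => pow_ne_zero _ (cosOfTan_ne_zero hε _)

theorem contDiff_carA2 {ε : ℝ} (hε : ε ^ 2 = 1) : ContDiff ℝ (⊤ : ℕ∞) (carA2 ε) := by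
  unfold carA2
  exact ContDiff.sub (by fun_prop)
    (ContDiff.div (by fun_prop) (by fun_prop) fun w => cosOfTan_ne_zero hε _)

theorem carA1_apply {ε : ℝ} {s : Fin 5 → ℝ} (hs : s ∈ carDom)
    (hc : Real.cos (s 2) = cosOfTan ε (Real.tan (s 2))) :
    carA1 ε ![carZ3 s, carZ4 s, s 4] = carZ5 s := by
  have h := hs.1
  simp only [carA1, carZ3, carZ4, carZ5, Matrix.cons_val, ← hc]
  field_simp

theorem carA2_apply {ε : ℝ} {s : Fin 5 → ℝ} (hs : s ∈ carDom)
    (hc : Real.cos (s 2) = cosOfTan ε (Real.tan (s 2))) :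
    carA2 ε ![carZ3 s, carZ4 s] =
      (3 * Real.tan (s 2) * Real.tan (s 3 - s 2) ^ 2
        - (1 + Real.tan (s 3 - s 2) ^ 2) * Real.tan (s 3 - s 2)) / Real.cos (s 2) ^ 4 := by
  have h := hs.1
  simp only [carA2, carZ3, carZ4, Matrix.cons_val_zero, Matrix.cons_val_one, ← hc]
  field_simp

theorem car_vf (s : Fin 5 → ℝ) (u : Fin 2 → ℝ) :
    car.vf s u = ![Real.cos (s 3 - s 2) * Real.cos (s 2) * u 0,
      Real.cos (s 3 - s 2) * Real.sin (s 2) * u 0, Real.sin (s 3 - s 2) * u 0, s 4, u 1] := by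
  ext i
  fin_cases i <;> simp [CAS.vf, car, mul_comm]

section Curves

variable {s : ℝ → Fin 5 → ℝ} {w : Fin 5 → ℝ} {t : ℝ}

theorem hasDerivAt_tan_comp {θ : ℝ → ℝ} {θ' : ℝ} (hθ : HasDerivAt θ θ' t)
    (h : Real.cos (θ t) ≠ 0) :
    HasDerivAt (fun τ => Real.tan (θ τ)) ((1 + Real.tan (θ t) ^ 2) * θ') t := by
  have := (Real.hasDerivAt_tan h).comp t hθ
  rwa [one_div, ← Real.inv_one_add_tan_sq h, inv_inv] at this

theorem hasDerivAt_inv_cos_cube_comp {θ : ℝ → ℝ} {θ' : ℝ} (hθ : HasDerivAt θ θ' t)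
    (h : Real.cos (θ t) ≠ 0) :
    HasDerivAt (fun τ => (Real.cos (θ τ) ^ 3)⁻¹)
      (3 * Real.tan (θ t) / Real.cos (θ t) ^ 3 * θ') t := by
  refine ((hθ.cos.fun_pow 3).fun_inv (pow_ne_zero 3 h)).congr_deriv ?_
  rw [Real.tan_eq_sin_div_cos]
  push_cast
  field_simp

theorem hasDerivAt_carZ3 (hs : HasDerivAt s w t) (hd : s t ∈ carDom) :
    HasDerivAt (fun τ => carZ3 (s τ)) ((1 + Real.tan (s t 2) ^ 2) * w 2) t :=
  hasDerivAt_tan_comp (hasDerivAt_pi.mp hs 2) hd.1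

theorem hasDerivAt_carZ4 (hs : HasDerivAt s w t) (hd : s t ∈ carDom) :
    HasDerivAt (fun τ => carZ4 (s τ))
      (((1 + Real.tan (s t 3 - s t 2) ^ 2) * (w 3 - w 2)
        + 3 * Real.tan (s t 2) * Real.tan (s t 3 - s t 2) * w 2) / Real.cos (s t 2) ^ 3) t := by
  have hi := hasDerivAt_pi.mp hs
  refine ((hasDerivAt_tan_comp ((hi 3).fun_sub (hi 2)) hd.2).fun_mul
    (hasDerivAt_inv_cos_cube_comp (hi 2) hd.1)).congr_deriv ?_
  ring

theorem hasDerivAt_carZ5 (hs : HasDerivAt s w t) (hd : s t ∈ carDom) :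
    HasDerivAt (fun τ => carZ5 (s τ))
      ((1 + Real.tan (s t 3 - s t 2) ^ 2) / Real.cos (s t 2) ^ 3 *
        (w 4 + s t 4 * (2 * Real.tan (s t 3 - s t 2) * (w 3 - w 2)
          + 3 * Real.tan (s t 2) * w 2))) t := by
  have hi := hasDerivAt_pi.mp hs
  refine (((hi 4).fun_mul
    (((hasDerivAt_tan_comp ((hi 3).fun_sub (hi 2)) hd.2).fun_pow 2).const_add 1)).fun_mul
    (hasDerivAt_inv_cos_cube_comp (hi 2) hd.1)).congr_deriv ?_
  push_cast
  ring

end Curves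

theorem car_deriv_carZ3 {s : Fin 5 → ℝ} (hs : s ∈ carDom) (u : Fin 2 → ℝ) :
    (1 + Real.tan (s 2) ^ 2) * car.vf s u 2 = carZ4 s * carV1 s u := by
  obtain ⟨h1, h2⟩ := hs
  rw [← inv_inv (1 + Real.tan (s 2) ^ 2), Real.inv_one_add_tan_sq h1]
  simp only [car_vf, carZ4, carV1, Matrix.cons_val, Real.tan_eq_sin_div_cos (s 3 - s 2)]
  field_simp

theorem car_deriv_carZ4 {ε : ℝ} {s : Fin 5 → ℝ} (hs : s ∈ carDom)
    (hc : Real.cos (s 2) = cosOfTan ε (Real.tan (s 2))) (u : Fin 2 → ℝ) :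
    ((1 + Real.tan (s 3 - s 2) ^ 2) * (car.vf s u 3 - car.vf s u 2)
        + 3 * Real.tan (s 2) * Real.tan (s 3 - s 2) * car.vf s u 2) / Real.cos (s 2) ^ 3
      = carZ5 s + carA2 ε ![carZ3 s, carZ4 s] * carV1 s u := by
  have h1 := hs.1
  have hsin := Real.tan_mul_cos hs.2
  rw [carA2_apply hs hc]
  simp only [car_vf, carZ5, carV1, Matrix.cons_val, ← hsin]
  field_simp
  ring

/-- The normalizing coordinates `z = ψ(s)` of the car. -/
def carCoord (s : Fin 5 → ℝ) : Fin 5 → ℝ := ![s 0, s 1, carZ3 s, carZ4 s, carZ5 s]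

/-- The inverse of `carCoord` on `carChart a b`. -/
def carCoordInv (a b ε : ℝ) (z : Fin 5 → ℝ) : Fin 5 → ℝ :=
  ![z 0, z 1, a + Real.arctan (z 2),
    b + Real.arctan (z 3 * cosOfTan ε (z 2) ^ 3) + (a + Real.arctan (z 2)),
    z 4 * cosOfTan ε (z 2) ^ 3 / (1 + (z 3 * cosOfTan ε (z 2) ^ 3) ^ 2)]

theorem contDiff_carCoordInv (a b ε : ℝ) : ContDiff ℝ (⊤ : ℕ∞) (carCoordInv a b ε) := by
  refine contDiff_pi.mpr fun i => ?_
  fin_cases i <;> simp only [carCoordInv, Fin.reduceFinMk, Fin.zero_eta, Fin.mk_one,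
    Matrix.cons_val]
  · fun_prop
  · fun_prop
  · exact contDiff_const.add (Real.contDiff_arctan.comp (by fun_prop))
  · exact (contDiff_const.add (Real.contDiff_arctan.comp (by fun_prop))).add
      (contDiff_const.add (Real.contDiff_arctan.comp (by fun_prop)))
  · exact ContDiff.div (by fun_prop) (by fun_prop) fun z => by positivity

theorem contDiffOn_tan_comp {X : Set (Fin 5 → ℝ)} {θ : (Fin 5 → ℝ) → ℝ}
    (hθ : ContDiff ℝ (⊤ : ℕ∞) θ) (h : ∀ s ∈ X, Real.cos (θ s) ≠ 0) :
    ContDiffOn ℝ (⊤ : ℕ∞) (fun s => Real.tan (θ s)) X := fun s hs =>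
  ((Real.contDiffAt_tan.mpr (h s hs)).comp s hθ.contDiffAt).contDiffWithinAt

theorem contDiffOn_tan_steering :
    ContDiffOn ℝ (⊤ : ℕ∞) (fun s : Fin 5 → ℝ => Real.tan (s 3 - s 2)) carDom :=
  contDiffOn_tan_comp (by fun_prop) fun _ hs => hs.2

theorem contDiffOn_carZ3 : ContDiffOn ℝ (⊤ : ℕ∞) carZ3 carDom :=
  contDiffOn_tan_comp (by fun_prop) fun _ hs => hs.1

theorem contDiffOn_carCoord : ContDiffOn ℝ (⊤ : ℕ∞) carCoord carDom := by
  have h2 := contDiffOn_tan_steering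
  have hc : ∀ s ∈ carDom, Real.cos (s 2) ^ 3 ≠ 0 := fun s hs => pow_ne_zero 3 hs.1
  refine contDiffOn_pi.mpr fun i => ?_
  fin_cases i <;> simp only [carCoord, Fin.reduceFinMk, Fin.zero_eta, Fin.mk_one,
    Matrix.cons_val]
  · fun_prop
  · fun_prop
  · exact contDiffOn_carZ3
  · exact h2.div (by fun_prop) hc
  · exact ContDiffOn.div (by fun_prop) (by fun_prop) hc

theorem fderiv_carCoord {s : Fin 5 → ℝ} (hs : s ∈ carDom) (w : Fin 5 → ℝ) :
    fderiv ℝ carCoord s w = ![w 0, w 1, (1 + Real.tan (s 2) ^ 2) * w 2,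
      ((1 + Real.tan (s 3 - s 2) ^ 2) * (w 3 - w 2)
        + 3 * Real.tan (s 2) * Real.tan (s 3 - s 2) * w 2) / Real.cos (s 2) ^ 3,
      (1 + Real.tan (s 3 - s 2) ^ 2) / Real.cos (s 2) ^ 3 *
        (w 4 + s 4 * (2 * Real.tan (s 3 - s 2) * (w 3 - w 2)
          + 3 * Real.tan (s 2) * w 2))] := by
  have hopen : IsOpen carDom := by
    unfold carDom
    exact IsOpen.and (isOpen_ne_fun (by fun_prop) continuous_const)
      (isOpen_ne_fun (by fun_prop) continuous_const)
  have hdiff : DifferentiableAt ℝ carCoord s :=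
    (contDiffOn_carCoord.contDiffAt (hopen.mem_nhds hs)).differentiableAt (by simp)
  have hline : HasDerivAt (fun τ : ℝ => s + τ • w) w 0 := by
    simpa using ((hasDerivAt_id (0 : ℝ)).smul_const w).const_add s
  have h0 : s + (0 : ℝ) • w = s := by simp
  have hd : s + (0 : ℝ) • w ∈ carDom := by rwa [h0]
  have hcomp : HasDerivAt (fun τ : ℝ => carCoord (s + τ • w)) (fderiv ℝ carCoord s w) 0 := by
    have hf : HasFDerivAt carCoord (fderiv ℝ carCoord s) (s + (0 : ℝ) • w) := by
      rw [h0]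
      exact hdiff.hasFDerivAt
    exact hf.comp_hasDerivAt (0 : ℝ) hline
  refine hcomp.unique (hasDerivAt_pi.mpr fun i => ?_)
  have hi := hasDerivAt_pi.mp hline
  have h3 := hasDerivAt_carZ3 hline hd
  have h4 := hasDerivAt_carZ4 hline hd
  have h5 := hasDerivAt_carZ5 hline hd
  rw [h0] at h3 h4 h5
  fin_cases i
  exacts [hi 0, hi 1, h3, h4, h5]

section Chart

variable {a b ε η : ℝ}

theorem carCoordInv_carCoord
    (ha : ∀ θ, Real.cos θ = ε * Real.cos (θ - a) ∧ Real.tan θ = Real.tan (θ - a))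
    (hb : ∀ θ, Real.cos θ = η * Real.cos (θ - b) ∧ Real.tan θ = Real.tan (θ - b))
    (hε : ε ^ 2 = 1) {s : Fin 5 → ℝ} (hs : s ∈ carChart a b) :
    carCoordInv a b ε (carCoord s) = s := by
  have hc := cos_eq_cosOfTan ha hs.1
  have hc0 : Real.cos (s 2) ≠ 0 := hc ▸ cosOfTan_ne_zero hε _
  have hT : carZ4 s * Real.cos (s 2) ^ 3 = Real.tan (s 3 - s 2) := by
    rw [carZ4]; field_simp
  ext i
  fin_cases i <;> simp only [carCoordInv, carCoord, Fin.reduceFinMk, Fin.zero_eta, Fin.mk_one,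
    Matrix.cons_val, carZ3, ← hc, hT, add_arctan_tan_of_branch ha hs.1,
    add_arctan_tan_of_branch hb hs.2]
  · ring
  · rw [carZ5]
    have : 1 + Real.tan (s 3 - s 2) ^ 2 ≠ 0 := by positivity
    field_simp

theorem carCoordInv_mem_carChart (z : Fin 5 → ℝ) : carCoordInv a b ε z ∈ carChart a b := by
  simp only [carChart, carCoordInv, Set.mem_ofPred_eq, Matrix.cons_val, add_sub_cancel_left,
    add_sub_cancel_right]
  exact ⟨abs_lt.mpr ⟨Real.neg_pi_div_two_lt_arctan _, Real.arctan_lt_pi_div_two _⟩,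
    abs_lt.mpr ⟨Real.neg_pi_div_two_lt_arctan _, Real.arctan_lt_pi_div_two _⟩⟩

theorem carCoord_carCoordInv
    (ha : ∀ θ, Real.cos θ = ε * Real.cos (θ - a) ∧ Real.tan θ = Real.tan (θ - a))
    (hb : ∀ θ, Real.cos θ = η * Real.cos (θ - b) ∧ Real.tan θ = Real.tan (θ - b))
    (hε : ε ^ 2 = 1) (z : Fin 5 → ℝ) : carCoord (carCoordInv a b ε z) = z := by
  have hc := cos_eq_cosOfTan ha (carCoordInv_mem_carChart (a := a) (b := b) (ε := ε) z).1
  have hC := cosOfTan_ne_zero hε (z 2)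
  simp only [carCoordInv, Matrix.cons_val, tan_add_arctan_of_branch ha] at hc
  ext i
  fin_cases i <;> simp only [carCoordInv, carCoord, Fin.reduceFinMk, Fin.zero_eta, Fin.mk_one,
    Matrix.cons_val, carZ3, carZ4, carZ5, add_sub_cancel_right, hc,
    tan_add_arctan_of_branch ha, tan_add_arctan_of_branch hb]
  · field_simp
  · have : 1 + (z 3 * cosOfTan ε (z 2) ^ 3) ^ 2 ≠ 0 := by positivity
    field_simp

theorem carCoord_image_carChart
    (ha : ∀ θ, Real.cos θ = ε * Real.cos (θ - a) ∧ Real.tan θ = Real.tan (θ - a))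
    (hb : ∀ θ, Real.cos θ = η * Real.cos (θ - b) ∧ Real.tan θ = Real.tan (θ - b))
    (hε : ε ^ 2 = 1) : carCoord '' carChart a b = Set.univ :=
  Set.eq_univ_of_forall fun z =>
    ⟨_, carCoordInv_mem_carChart z, carCoord_carCoordInv ha hb hε z⟩

end Chart

/-- The drift part `α` of the normalizing feedback `u = α + βv` of the car. -/
def carAlpha (s : Fin 5 → ℝ) : Fin 2 → ℝ := ![0, -(2 * Real.tan (s 3 - s 2) * s 4 ^ 2)]

/-- The input matrix `β` of the normalizing feedback `u = α + βv` of the car. -/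
def carBeta (s : Fin 5 → ℝ) : Fin 2 → Fin 2 → ℝ :=
  ![![1 / (Real.cos (s 3 - s 2) * Real.cos (s 2)), 0],
    ![-(s 4 * (3 * carZ3 s - 2 * Real.tan (s 3 - s 2)) * Real.tan (s 3 - s 2) / Real.cos (s 2)),
      Real.cos (s 2) ^ 3 / (1 + Real.tan (s 3 - s 2) ^ 2)]]

theorem contDiffOn_carAlpha : ContDiffOn ℝ (⊤ : ℕ∞) carAlpha carDom := by
  have h2 := contDiffOn_tan_steering
  refine contDiffOn_pi.mpr fun i => ?_
  fin_cases i <;> simp only [carAlpha, Fin.zero_eta, Fin.mk_one, Matrix.cons_val_zero,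
    Matrix.cons_val_one] <;> fun_prop

theorem contDiffOn_carBeta : ContDiffOn ℝ (⊤ : ℕ∞) carBeta carDom := by
  have h2 := contDiffOn_tan_steering
  have h3 := contDiffOn_carZ3
  refine contDiffOn_pi.mpr fun i => contDiffOn_pi.mpr fun j => ?_
  fin_cases i <;> fin_cases j <;> simp only [carBeta, Fin.zero_eta, Fin.mk_one,
    Matrix.cons_val_zero, Matrix.cons_val_one]
  · exact ContDiffOn.div (by fun_prop) (by fun_prop) fun s hs => mul_ne_zero hs.2 hs.1
  · fun_prop
  · exact (ContDiffOn.div (by fun_prop) (by fun_prop) fun s hs => hs.1).neg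
  · exact ContDiffOn.div (by fun_prop) (by fun_prop) fun s _ => by positivity

theorem det_carBeta_ne_zero {s : Fin 5 → ℝ} (hs : s ∈ carDom) :
    (Matrix.of (carBeta s)).det ≠ 0 := by
  obtain ⟨h1, h2⟩ := hs
  have : 1 + Real.tan (s 3 - s 2) ^ 2 ≠ 0 := by positivity
  simp only [Matrix.det_fin_two, Matrix.of_apply, carBeta, Matrix.cons_val_zero,
    Matrix.cons_val_one, zero_mul, sub_zero]
  positivity

theorem fderiv_carCoord_feedback {ε : ℝ} {s : Fin 5 → ℝ} (hs : s ∈ carDom)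
    (hc : Real.cos (s 2) = cosOfTan ε (Real.tan (s 2))) (v : Fin 2 → ℝ) :
    fderiv ℝ carCoord s (car.vf s fun i => carAlpha s i + ∑ j, carBeta s i j * v j) =
      (NF'' (fun _ => 0) (fun w => w 2) (fun _ => 0) (fun w => w 3)
        (fun z => z 4) (fun z => carA2 ε ![z 2, z 3])).vf (carCoord s) v := by
  obtain ⟨h1, h2⟩ := id hs
  set u : Fin 2 → ℝ := fun i => carAlpha s i + ∑ j, carBeta s i j * v j with hu
  have hu0 : u 0 = v 0 / (Real.cos (s 3 - s 2) * Real.cos (s 2)) := by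
    simp [hu, carAlpha, carBeta, div_eq_inv_mul]
  have hu1 : u 1 = -(2 * Real.tan (s 3 - s 2) * s 4 ^ 2)
      + (-(s 4 * (3 * Real.tan (s 2) - 2 * Real.tan (s 3 - s 2)) * Real.tan (s 3 - s 2)
          / Real.cos (s 2)) * v 0
        + Real.cos (s 2) ^ 3 / (1 + Real.tan (s 3 - s 2) ^ 2) * v 1) := by
    simp [hu, carAlpha, carBeta, carZ3]
  have hv : carV1 s u = v 0 := by
    rw [carV1, hu0]; field_simp
  rw [fderiv_carCoord hs, car_deriv_carZ3 hs, car_deriv_carZ4 hs hc, hv]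
  have hsin := Real.tan_mul_cos h2
  have hsin' := Real.tan_mul_cos h1
  have hT : 1 + Real.tan (s 3 - s 2) ^ 2 ≠ 0 := by positivity
  rw [car_vf]
  ext i
  fin_cases i <;>
    simp [CAS.vf, NF'', carCoord, head3, head4, hu0, hu1, carZ3, ← hsin, ← hsin', mul_comm]
  · field_simp
  · field_simp
  · field_simp
    ring

/-- **Example 5.2 (car with steering dynamics).** With `z₁ = x`, `z₂ = y`,
`z₃ = tan θ₁`, `z₄ = tan(θ₂-θ₁)/cos³θ₁` and `v₁ = cos(θ₂-θ₁)cos(θ₁)u₁`: along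
every trajectory `ż₁ = v₁`, `ż₂ = z₃v₁`, `ż₃ = z₄v₁`; there are smooth
functions `a₁(z₃,z₄,ω₂)` and `a₂(z₃,z₄)` with `ż₄ = a₁(z₃,z₄,ω₂) +
a₂(z₃,z₄)v₁`; and, after introducing `z₅ = a₁(z₃,z₄,ω₂)` and a suitable
invertible static feedback, the system takes the normal form `NF''₉`
(with `c₁ ≡ 0` and `b₁ ≡ 0`), compatibly with the minimal x-flat output
`φ = (x, y) = (z₁, z₂)`. -/
theorem statement18 :
    -- (1) ż₁ = v₁, ż₂ = z₃v₁, ż₃ = z₄v₁ along every trajectory in the domain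
    (∀ (s : ℝ → Fin 5 → ℝ) (u : ℝ → Fin 2 → ℝ), ContDiff ℝ (⊤ : ℕ∞) u →
      car.IsTrajOn carDom s u → ∀ t,
      HasDerivAt (fun τ => s τ 0) (carV1 (s t) (u t)) t ∧
      HasDerivAt (fun τ => s τ 1) (carZ3 (s t) * carV1 (s t) (u t)) t ∧
      HasDerivAt (fun τ => carZ3 (s τ)) (carZ4 (s t) * carV1 (s t) (u t)) t) ∧
    -- (2) local existence of smooth a₁(z₃, z₄, ω₂) and a₂(z₃, z₄) with
    --     ż₄ = a₁(z₃,z₄,ω₂) + a₂(z₃,z₄)v₁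
    (∀ s₀ ∈ carDom, ∃ (U : Set (Fin 5 → ℝ)) (A₁ : Set (Fin 3 → ℝ))
      (A₂ : Set (Fin 2 → ℝ)) (a₁ : (Fin 3 → ℝ) → ℝ) (a₂ : (Fin 2 → ℝ) → ℝ),
      IsOpen U ∧ s₀ ∈ U ∧ U ⊆ carDom ∧ IsOpen A₁ ∧ IsOpen A₂ ∧
      ContDiffOn ℝ (⊤ : ℕ∞) a₁ A₁ ∧ ContDiffOn ℝ (⊤ : ℕ∞) a₂ A₂ ∧
      (∀ s ∈ U, (![carZ3 s, carZ4 s, s 4] : Fin 3 → ℝ) ∈ A₁) ∧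
      (∀ s ∈ U, (![carZ3 s, carZ4 s] : Fin 2 → ℝ) ∈ A₂) ∧
      ∀ (s : ℝ → Fin 5 → ℝ) (u : ℝ → Fin 2 → ℝ), ContDiff ℝ (⊤ : ℕ∞) u →
        car.IsTrajOn U s u → ∀ t,
        HasDerivAt (fun τ => carZ4 (s τ))
          (a₁ ![carZ3 (s t), carZ4 (s t), s t 4]
            + a₂ ![carZ3 (s t), carZ4 (s t)] * carV1 (s t) (u t)) t) ∧
    -- (3) static feedback equivalence to NF''₉ (with c₁ ≡ 0 and b₁ ≡ 0),
    --     compatibly with the flat output φ = (x, y)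
    (∀ s₀ ∈ carDom, ∃ (A2 : (Fin 2 → ℝ) → ℝ) (z₀ : Fin 5 → ℝ),
      LocallySFEThrough car
        (NF'' (fun _ => 0) (fun w => w 2) (fun _ => 0) (fun w => w 3)
          (fun z => z 4) (fun z => A2 ![z 2, z 3]))
        carDom s₀ z₀
        (fun U ψ => ∀ s ∈ U, ψ s 0 = s 0 ∧ ψ s 1 = s 1)) := by
  refine ⟨fun s u _ hs t => ?_, fun s₀ hs₀ => ?_, fun s₀ hs₀ => ?_⟩
  · have hd := hs.1 t
    have hi := hasDerivAt_pi.mp (hs.2 t)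
    refine ⟨?_, ?_, ?_⟩
    · exact (hi 0).congr_deriv (by simp only [car_vf, carV1, Matrix.cons_val_zero])
    · refine (hi 1).congr_deriv ?_
      simp only [car_vf, carZ3, carV1, Matrix.cons_val, ← Real.tan_mul_cos hd.1]
      ring
    · rw [← car_deriv_carZ3 hd]
      exact hasDerivAt_carZ3 (hs.2 t) hd
  · obtain ⟨a, ε, hε, ha₀, ha⟩ := exists_cos_tan_branch hs₀.1
    obtain ⟨b, η, hη, hb₀, hb⟩ := exists_cos_tan_branch hs₀.2
    have hU := carChart_subset_carDom hε hη ha hb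
    refine ⟨carChart a b, Set.univ, Set.univ, carA1 ε, carA2 ε, isOpen_carChart a b,
      ⟨ha₀, hb₀⟩, hU, isOpen_univ, isOpen_univ, (contDiff_carA1 hε).contDiffOn,
      (contDiff_carA2 hε).contDiffOn, fun _ _ => trivial, fun _ _ => trivial,
      fun s u _ hs t => ?_⟩
    have hd := hU (hs.1 t)
    have hc := cos_eq_cosOfTan ha (hs.1 t).1
    rw [carA1_apply hd hc, ← car_deriv_carZ4 hd hc]
    exact hasDerivAt_carZ4 (hs.2 t) hd
  · obtain ⟨a, ε, hε, ha₀, ha⟩ := exists_cos_tan_branch hs₀.1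
    obtain ⟨b, η, hη, hb₀, hb⟩ := exists_cos_tan_branch hs₀.2
    have hU := carChart_subset_carDom hε hη ha hb
    refine ⟨carA2 ε, carCoord s₀, carChart a b, carCoord, carCoordInv a b ε, carAlpha, carBeta,
      isOpen_carChart a b, ⟨ha₀, hb₀⟩, hU, rfl, contDiffOn_carCoord.mono hU, ?_,
      (contDiff_carCoordInv a b ε).contDiffOn, fun s hs => carCoordInv_carCoord ha hb hε hs,
      contDiffOn_carAlpha.mono hU, contDiffOn_carBeta.mono hU,
      fun s hs => det_carBeta_ne_zero (hU hs),
      fun s hs v => fderiv_carCoord_feedback (hU hs) (cos_eq_cosOfTan ha hs.1) v,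
      fun s _ => ⟨rfl, rfl⟩⟩
    rw [carCoord_image_carChart ha hb hε]
    exact isOpen_univ

end ControlAffine
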